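/- Let H be a real Hilbert space, k ∈ ℕ, V ⊆ H a linear subspace with dim V = k+1, r > 0, and let S^k = { x ∈ V : ‖x‖ = r } be the k-dimensional sphere of radius r centered at 0. Then gen(S^k) = k+1. In particular, there is no continuous odd map φ : H → ℝ^m with m ≤ k such that φ(x) ≠ 0 for all x ∈ S^k, while such a map exists for m = k+1. -/

import Mathlib

open MeasureTheory Real Set
open scoped ENNReal

noncomputable section

/-- The Krasnoselskii genus of a subset `E` of a real normed space `H`: the least `m ∈ ℕ`
(as an element of `ℕ∞`, with value `⊤` if none exists) such that there is a continuous odd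
map `φ : H → ℝ^m` with `φ(u) ≠ 0` for every `u ∈ E`. -/
def genus {H : Type*} [NormedAddCommGroup H] (E : Set H) : ℕ∞ :=
  sInf {m : ℕ∞ | ∃ k : ℕ, m = (k : ℕ∞) ∧
    ∃ φ : H → EuclideanSpace ℝ (Fin k), Continuous φ ∧ (∀ u, φ (-u) = -(φ u)) ∧
      ∀ u ∈ E, φ u ≠ 0}

/-!
The upper bound is a continuous linear retraction onto `V`. The lower bound is the Borsuk–Ulam
theorem, proved with mod `2` chains of small tuples of points. Write `a` for the antipodal map.
On nested spheres `S⁰ ⊂ S¹ ⊂ …` there are chains `cₙ` of tuples of arbitrarily small diameter with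
`∂cₙ₊₁ = cₙ + a cₙ`, because `Sⁿ` contracts inside `Sⁿ⁺¹`. If `s` is a `0`-cochain with
`s (-x) = s x + 1`, then pairing `δs ⌣ ω` with `cₙ₊₁` gives the same value as pairing `ω` with `cₙ`
for every product `ω` of coboundaries of such cochains, so a product of `n` of them takes the value
`1` on `cₙ`. Given an odd map to `ℝⁿ`, take for `s₁, …, sₙ` the signs of its coordinates. If the map
has no zero on the sphere, then by compactness some coordinate has constant sign on each
sufficiently small tuple, so the product of the `δsᵢ` vanishes on `cₙ`, a contradiction.
-/

open Finsupp (single supported lmapDomain)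

section Finsupp

variable {α R M : Type*} [Ring R] [AddCommGroup M] [Module R M]

lemma apply_mem_of_mem_supported {T : (α →₀ R) →ₗ[R] M} {N : Submodule R M} {S : Set α}
    (h : ∀ a ∈ S, T (single a 1) ∈ N) {c : α →₀ R} (hc : c ∈ supported R R S) : T c ∈ N := by
  rw [Finsupp.supported_eq_span_single] at hc
  exact (Submodule.map_span_le T _ N).2 (forall_mem_image.2 h) (Submodule.mem_map_of_mem hc)

lemma eq_of_mem_supported {T T' : (α →₀ R) →ₗ[R] M} {S : Set α}
    (h : ∀ a ∈ S, T (single a 1) = T' (single a 1)) {c : α →₀ R} (hc : c ∈ supported R R S) :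
    T c = T' c := by
  rw [Finsupp.supported_eq_span_single] at hc
  exact LinearMap.eqOn_span (forall_mem_image.2 h) hc

end Finsupp

/-- Formal `R`-linear combinations of finite tuples of points of `E`. A tuple of length `n + 1` is
an ordered `n`-simplex, possibly degenerate, and `[]` is the empty simplex of the augmented
complex. -/
abbrev TupleChain (R E : Type*) [Ring R] := List E →₀ R

namespace TupleChain

section Ring

variable {R E F : Type*} [Ring R]

/-- The cone operator, prepending the apex `v` to every tuple of a chain. -/
def cone (v : E) : TupleChain R E →ₗ[R] TupleChain R E := lmapDomain R R (List.cons v)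

/-- The chain map induced by a map of vertices. -/
def map (f : E → F) : TupleChain R E →ₗ[R] TupleChain R F := lmapDomain R R (List.map f)

@[simp]
lemma cone_single (v : E) (l : List E) (a : R) : cone v (single l a) = single (v :: l) a :=
  Finsupp.mapDomain_single

@[simp]
lemma map_single (f : E → F) (l : List E) (a : R) : map f (single l a) = single (l.map f) a :=
  Finsupp.mapDomain_single

lemma map_cone (f : E → F) (v : E) (c : TupleChain R E) :
    map f (cone v c) = cone (f v) (map f c) := by
  simp only [map, cone, Finsupp.lmapDomain_apply, ← Finsupp.mapDomain_comp]
  rfl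

lemma map_map {G : Type*} (g : F → G) (f : E → F) (c : TupleChain R E) :
    map g (map f c) = map (g ∘ f) c := by
  simp only [map, Finsupp.lmapDomain_apply, ← Finsupp.mapDomain_comp, List.map_comp_map]

lemma map_id (c : TupleChain R E) : map id c = c := by
  simp [map]

/-- The boundary of a tuple: the alternating sum of the tuples obtained by omitting a vertex. -/
def boundaryTuple : List E → TupleChain R E
  | [] => 0
  | v :: l => single l 1 - cone v (boundaryTuple l)

/-- The boundary operator of the augmented complex of tuples. -/
def boundary : TupleChain R E →ₗ[R] TupleChain R E := Finsupp.linearCombination R boundaryTuple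

@[simp]
lemma boundary_nil : boundary (single [] 1 : TupleChain R E) = 0 := by
  simp [boundary, boundaryTuple]

lemma boundary_cons (v : E) (l : List E) :
    boundary (single (v :: l) 1 : TupleChain R E)
      = single l 1 - cone v (boundary (single l 1)) := by
  simp [boundary, boundaryTuple]

lemma boundary_cone (v : E) (c : TupleChain R E) :
    boundary (cone v c) = c - cone v (boundary c) := by
  have : boundary ∘ₗ cone v = LinearMap.id - cone v ∘ₗ boundary (R := R) := by
    ext l : 2
    simp [boundary_cons]
  exact LinearMap.congr_fun this c

lemma boundary_boundary (c : TupleChain R E) : boundary (boundary c) = 0 := by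
  have tuple (l : List E) : boundary (boundary (single l (1 : R))) = 0 := by
    induction l with
    | nil => simp
    | cons v l ih => simp [boundary_cons, boundary_cone, ih]
  have : boundary ∘ₗ boundary = (0 : TupleChain R E →ₗ[R] TupleChain R E) := by
    ext l : 2
    simpa using tuple l
  exact LinearMap.congr_fun this c

lemma boundary_map (f : E → F) (c : TupleChain R E) :
    boundary (map f c) = map f (boundary c) := by
  have tuple (l : List E) :
      boundary (map f (single l (1 : R))) = map f (boundary (single l 1)) := by
    induction l with
    | nil => simp
    | cons v l ih =>
      rw [map_single] at ih
      simp [boundary_cons, map_cone, ih]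
  have : boundary ∘ₗ map f = map f ∘ₗ boundary (R := R) := by
    ext l : 2
    simpa using tuple l
  exact LinearMap.congr_fun this c

/-- The prism over a tuple, with bottom face given by `f` and top face given by `g`. -/
def prismTuple (f g : E → F) : List E → TupleChain R F
  | [] => 0
  | v :: l => cone (f v) (single (g v :: l.map g) 1 - prismTuple f g l)

/-- The prism operator, a chain homotopy from `map f` to `map g`. -/
def prism (f g : E → F) : TupleChain R E →ₗ[R] TupleChain R F :=
  Finsupp.linearCombination R (prismTuple f g)

@[simp]
lemma prism_nil (f g : E → F) : prism f g (single [] 1 : TupleChain R E) = 0 := by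
  simp [prism, prismTuple]

lemma prism_cone (f g : E → F) (v : E) (c : TupleChain R E) :
    prism f g (cone v c) = cone (f v) (map g (cone v c) - prism f g c) := by
  have : prism f g ∘ₗ cone v = cone (f v) ∘ₗ (map g ∘ₗ cone v - prism (R := R) f g) := by
    ext l : 2
    simp [prism, prismTuple]
  exact LinearMap.congr_fun this c

lemma boundary_prism_add_prism_boundary (f g : E → F) (c : TupleChain R E) :
    boundary (prism f g c) + prism f g (boundary c) = map g c - map f c := by
  have tuple (l : List E) : boundary (prism f g (single l (1 : R)))
      + prism f g (boundary (single l 1)) = map g (single l 1) - map f (single l 1) := by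
    induction l with
    | nil => simp
    | cons v l ih =>
      set c : TupleChain R E := single l 1
      calc boundary (prism f g (single (v :: l) 1)) + prism f g (boundary (single (v :: l) 1))
          = boundary (prism f g (cone v c)) + prism f g (boundary (cone v c)) := by
            rw [cone_single]
        _ = map g (cone v c)
              - cone (f v) (map g c - (boundary (prism f g c) + prism f g (boundary c))) := by
            simp only [prism_cone, boundary_cone, boundary_map, map_sub, map_add]
            abel
        _ = map g (cone v c) - cone (f v) (map f c) := by rw [ih, sub_sub_cancel]
        _ = map g (single (v :: l) 1) - map f (single (v :: l) 1) := by
            rw [← map_cone, cone_single]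
  have : boundary ∘ₗ prism f g + prism f g ∘ₗ boundary = map g - map (R := R) f := by
    ext l : 2
    simpa using tuple l
  exact LinearMap.congr_fun this c

lemma boundary_prism (f g : E → F) {z : TupleChain R E} (hz : boundary z = 0) :
    boundary (prism f g z) = map g z - map f z := by
  simpa [hz] using boundary_prism_add_prism_boundary f g z

variable (R) in
/-- The chains of tuples of points of `A`. -/
abbrev chainsIn (A : Set E) : Submodule R (TupleChain R E) := supported R R {l | ∀ x ∈ l, x ∈ A}

lemma boundary_mem_chainsIn {A : Set E} {c : TupleChain R E} (hc : c ∈ chainsIn R A) :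
    boundary c ∈ chainsIn R A := by
  refine apply_mem_of_mem_supported (fun l hl => ?_) hc
  induction l with
  | nil => simp
  | cons v l ih =>
    obtain ⟨hv, hl⟩ := List.forall_mem_cons.1 hl
    rw [boundary_cons]
    refine sub_mem (Finsupp.single_mem_supported R 1 hl)
      (apply_mem_of_mem_supported (fun l' hl' => ?_) (ih hl))
    rw [cone_single]
    exact Finsupp.single_mem_supported R 1 (List.forall_mem_cons.2 ⟨hv, hl'⟩)

lemma map_congr_of_eqOn {A : Set E} {f g : E → F} (hfg : EqOn f g A) {c : TupleChain R E}
    (hc : c ∈ chainsIn R A) : map f c = map g c := by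
  refine eq_of_mem_supported (fun l hl => ?_) hc
  rw [map_single, map_single, List.map_congr_left fun x hx => hfg (hl x hx)]

lemma prism_single_mem_supported (f g : E → F) (l : List E) :
    prism f g (single l (1 : R)) ∈
      supported R R {l' | ∀ x ∈ l', ∃ φ ∈ ({f, g} : Set (E → F)), ∃ v ∈ l, φ v = x} := by
  induction l with
  | nil => simp
  | cons v l ih =>
    rw [← cone_single, prism_cone]
    refine apply_mem_of_mem_supported (S := {l' | ∀ x ∈ l', ∃ φ ∈ ({f, g} : Set (E → F)),
      ∃ w ∈ v :: l, φ w = x}) (fun l' hl' => ?_) (sub_mem ?_ (Finsupp.supported_mono ?_ ih))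
    · rw [cone_single]
      refine Finsupp.single_mem_supported R 1 fun x hx => ?_
      obtain rfl | hx := List.mem_cons.1 hx
      exacts [⟨f, by simp, v, by simp, rfl⟩, hl' x hx]
    · rw [cone_single, map_single]
      refine Finsupp.single_mem_supported R 1 fun x hx => ?_
      obtain ⟨w, hw, rfl⟩ := List.mem_map.1 hx
      exact ⟨g, by simp, w, hw, rfl⟩
    · intro l' hl' x hx
      obtain ⟨φ, hφ, w, hw, rfl⟩ := hl' x hx
      exact ⟨φ, hφ, w, List.mem_cons_of_mem v hw, rfl⟩

/-- The tuples of points of `K` whose points are pairwise at distance less than `ε`: the ordered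
simplices of the Vietoris–Rips complex of `K` at scale `ε`. -/
def smallTuples [PseudoMetricSpace E] (K : Set E) (ε : ℝ) : Set (List E) :=
  {l | (∀ x ∈ l, x ∈ K) ∧ ∀ x ∈ l, ∀ y ∈ l, dist x y < ε}

variable (R) in
/-- The chains supported on `smallTuples K ε`. -/
abbrev smallChains [PseudoMetricSpace E] (K : Set E) (ε : ℝ) : Submodule R (TupleChain R E) :=
  supported R R (smallTuples K ε)

lemma smallChains_le_chainsIn [PseudoMetricSpace E] (K : Set E) (ε : ℝ) :
    smallChains R K ε ≤ chainsIn R K :=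
  Finsupp.supported_mono fun _ hl => hl.1

section Homotopy

variable [PseudoMetricSpace E] [PseudoMetricSpace F] {K : Set E} {L : Set F} {δ ε : ℝ}

lemma map_mem_smallChains {f : E → F} (hf : MapsTo f K L)
    (hdist : ∀ x ∈ K, ∀ y ∈ K, dist x y < δ → dist (f x) (f y) < ε) {c : TupleChain R E}
    (hc : c ∈ smallChains R K δ) : map f c ∈ smallChains R L ε := by
  refine apply_mem_of_mem_supported (fun l hl => ?_) hc
  obtain ⟨hlK, hl⟩ := hl
  rw [map_single]
  refine Finsupp.single_mem_supported R 1 ⟨?_, ?_⟩ <;> simp only [List.forall_mem_map]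
  exacts [fun x hx => hf (hlK x hx),
    fun x hx y hy => hdist x (hlK x hx) y (hlK y hy) (hl x hx y hy)]

lemma prism_mem_smallChains {f g : E → F} (hmaps : ∀ φ ∈ ({f, g} : Set (E → F)), MapsTo φ K L)
    (hdist : ∀ φ ∈ ({f, g} : Set (E → F)), ∀ ψ ∈ ({f, g} : Set (E → F)), ∀ x ∈ K, ∀ y ∈ K,
      dist x y < δ → dist (φ x) (ψ y) < ε) {c : TupleChain R E} (hc : c ∈ smallChains R K δ) :
    prism f g c ∈ smallChains R L ε := by
  refine apply_mem_of_mem_supported (fun l hl => ?_) hc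
  refine Finsupp.supported_mono ?_ (prism_single_mem_supported f g l)
  refine fun l' hl' => ⟨fun x hx => ?_, fun x hx y hy => ?_⟩
  · obtain ⟨φ, hφ, v, hv, rfl⟩ := hl' x hx
    exact hmaps φ hφ (hl.1 v hv)
  · obtain ⟨φ, hφ, v, hv, rfl⟩ := hl' x hx
    obtain ⟨ψ, hψ, w, hw, rfl⟩ := hl' y hy
    exact hdist φ hφ ψ hψ v (hl.1 v hv) w (hl.1 w hw) (hl.2 v hv w hw)

lemma exists_boundary_eq_map_sub_map {h : ℝ → E → F} (hK : IsCompact K)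
    (hh : ContinuousOn (Function.uncurry h) (Icc 0 1 ×ˢ K))
    (hmaps : ∀ t ∈ Icc (0 : ℝ) 1, MapsTo (h t) K L) (hε : 0 < ε) :
    ∃ δ > 0, ∀ z ∈ smallChains R K δ, boundary z = 0 →
      ∃ c ∈ smallChains R L ε, boundary c = map (h 1) z - map (h 0) z := by
  obtain ⟨δ, hδ, hclose⟩ := Metric.uniformContinuousOn_iff.1
    ((isCompact_Icc.prod hK).uniformContinuousOn_of_continuous hh) ε hε
  obtain ⟨n, hn⟩ := exists_nat_one_div_lt hδ
  let t (i : ℕ) : ℝ := i / (n + 1)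
  have ht {i : ℕ} (hi : i ≤ n + 1) : t i ∈ Icc 0 1 :=
    ⟨by positivity, (div_le_one (by positivity)).2 (mod_cast hi)⟩
  have hstep (i : ℕ) : dist (t i) (t (i + 1)) < δ := by
    have : t i - t (i + 1) = -(1 / (n + 1)) := by simp only [t]; push_cast; ring
    rwa [Real.dist_eq, this, abs_neg, abs_of_pos (by positivity)]
  have hends {i : ℕ} (hi : i < n + 1) {φ : E → F} (hφ : φ ∈ ({h (t i), h (t (i + 1))} : Set _)) :
      ∃ u ∈ ({t i, t (i + 1)} : Set ℝ), u ∈ Icc (0 : ℝ) 1 ∧ h u = φ := by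
    obtain rfl | rfl := hφ
    exacts [⟨t i, by simp, ht hi.le, rfl⟩, ⟨t (i + 1), by simp, ht hi, rfl⟩]
  refine ⟨δ, hδ, fun z hz hz0 =>
    ⟨∑ i ∈ Finset.range (n + 1), prism (h (t i)) (h (t (i + 1))) z, ?_, ?_⟩⟩
  · refine sum_mem fun i hi => ?_
    rw [Finset.mem_range] at hi
    refine prism_mem_smallChains (fun φ hφ => ?_) (fun φ hφ ψ hψ x hx y hy hxy => ?_) hz
    · obtain ⟨u, -, hu, rfl⟩ := hends hi hφ
      exact hmaps u hu
    · obtain ⟨u, hui, hu, rfl⟩ := hends hi hφ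
      obtain ⟨v, hvi, hv, rfl⟩ := hends hi hψ
      refine hclose (u, x) ⟨hu, hx⟩ (v, y) ⟨hv, hy⟩ (max_lt ?_ hxy)
      obtain rfl | rfl := hui <;> obtain rfl | rfl := hvi <;>
        simp only [dist_self, hδ, hstep, dist_comm (t (i + 1)) (t i)]
  · simp only [map_sum, boundary_prism _ _ hz0]
    rw [Finset.sum_range_sub fun i => map (h (t i)) z]
    simp [t, div_self (Nat.cast_add_one_ne_zero (R := ℝ) n)]

lemma exists_boundary_eq_of_homotopy_const {K L : Set E} {h : ℝ → E → E} {e : E}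
    (hK : IsCompact K) (hh : ContinuousOn (Function.uncurry h) (Icc 0 1 ×ˢ K))
    (hmaps : ∀ t ∈ Icc (0 : ℝ) 1, MapsTo (h t) K L) (h0 : EqOn (h 0) id K)
    (h1 : EqOn (h 1) (fun _ => e) K) (he : e ∈ L) (hε : 0 < ε) :
    ∃ δ > 0, ∀ z ∈ smallChains R K δ, boundary z = 0 →
      ∃ c ∈ smallChains R L ε, boundary c = z := by
  obtain ⟨δ, hδ, hfill⟩ := exists_boundary_eq_map_sub_map (R := R) hK hh hmaps hε
  refine ⟨δ, hδ, fun z hz hz0 => ?_⟩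
  have hzK := smallChains_le_chainsIn K δ hz
  obtain ⟨c, hc, hcz⟩ := hfill z hz hz0
  rw [map_congr_of_eqOn h1 hzK, map_congr_of_eqOn h0 hzK, map_id] at hcz
  refine ⟨cone e (map (fun _ => e) z) - c, sub_mem ?_ hc, ?_⟩
  · refine apply_mem_of_mem_supported (T := cone e ∘ₗ map (R := R) fun _ => e) (fun l _ => ?_) hz
    have hall : ∀ x ∈ e :: l.map (fun _ => e), x = e := by simp
    rw [LinearMap.comp_apply, map_single, cone_single]
    refine Finsupp.single_mem_supported R 1 ⟨fun x hx => hall x hx ▸ he, fun x hx y hy => ?_⟩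
    rwa [hall x hx, hall y hy, dist_self]
  · simp only [map_sub, boundary_cone, boundary_map, hz0, hcz, map_zero, sub_zero,
      sub_sub_cancel]

end Homotopy

/-! ### Cup products of coboundaries -/

section Cup

/-- The cap product of a `0`-cochain with a chain: each tuple is multiplied by the value of `s` at
its first vertex, and the empty tuple is sent to `0`. -/
def weight (s : E → R) : TupleChain R E →ₗ[R] TupleChain R E :=
  Finsupp.linearCombination R fun l => single l (l.head?.elim 0 s)

@[simp]
lemma weight_nil (s : E → R) : weight s (single [] 1) = 0 := by
  simp [weight]

lemma weight_cons (s : E → R) (v : E) (l : List E) :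
    weight s (single (v :: l) 1) = single (v :: l) (s v) := by
  simp [weight]

lemma weight_mem_supported (s : E → R) {S : Set (List E)} {c : TupleChain R E}
    (hc : c ∈ supported R R S) : weight s c ∈ supported R R S := by
  refine apply_mem_of_mem_supported (fun l hl => ?_) hc
  simpa [weight] using Finsupp.single_mem_supported R _ hl

/-- Evaluation of the cup product of the coboundaries of the `0`-cochains in the list; the empty
product is the augmentation, which is the coefficient of `[]` in the boundary. Up to signs, capping
with `δs` is `c ↦ ∂(weight s c) + weight s (∂c)`, and the recursion keeps only the second term
because every product of coboundaries vanishes on boundaries. -/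
def cup : List (E → R) → TupleChain R E →ₗ[R] R
  | [] => Finsupp.lapply [] ∘ₗ boundary
  | s :: ss => cup ss ∘ₗ weight s ∘ₗ boundary

lemma cup_cons (s : E → R) (ss : List (E → R)) (c : TupleChain R E) :
    cup (s :: ss) c = cup ss (weight s (boundary c)) :=
  rfl

lemma cup_boundary (ss : List (E → R)) (c : TupleChain R E) : cup ss (boundary c) = 0 := by
  cases ss <;> simp [cup, boundary_boundary]

@[simp]
lemma cup_single_nil (ss : List (E → R)) : cup ss (single [] 1) = 0 := by
  cases ss <;> simp [cup]

end Cup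
end Ring

section CommRing

variable {R E : Type*} [CommRing R]

lemma cup_weight_of_forall_eq (ss : List (E → R)) {s : E → R} {b : R} {c : TupleChain R E}
    (hc : c ∈ chainsIn R (s ⁻¹' {b})) : cup ss (weight s c) = b * cup ss c := by
  refine eq_of_mem_supported (T := cup ss ∘ₗ weight s) (T' := b • cup ss) (fun l hl => ?_) hc
  cases l with
  | nil => simp
  | cons v l =>
    rw [LinearMap.comp_apply, LinearMap.smul_apply, weight_cons, hl v List.mem_cons_self,
      ← Finsupp.smul_single_one, map_smul]

lemma cup_eq_zero_of_forall_eq {ss : List (E → R)} {s : E → R} (hs : s ∈ ss) {b : R}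
    {c : TupleChain R E} (hc : c ∈ chainsIn R (s ⁻¹' {b})) : cup ss c = 0 := by
  induction ss generalizing c with
  | nil => simp at hs
  | cons t ss ih =>
    have hbc := boundary_mem_chainsIn hc
    rw [cup_cons]
    obtain rfl | hs := List.mem_cons.1 hs
    · rw [cup_weight_of_forall_eq ss hbc, cup_boundary, mul_zero]
    · exact ih hs (weight_mem_supported t hbc)

end CommRing

section Antipode

/-- `s` takes opposite values at antipodal points of `A`. -/
def IsOddSignOn {E : Type*} [Neg E] (s : E → ZMod 2) (A : Set E) : Prop :=
  ∀ x ∈ A, s (-x) = s x + 1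

variable {E : Type*} {A : Set E} {c : TupleChain (ZMod 2) E}

lemma cup_nil_map {F R : Type*} [Ring R] (f : E → F) (c : TupleChain R E) :
    cup [] (map f c) = cup [] c := by
  have : Finsupp.lapply [] ∘ₗ map f = Finsupp.lapply (R := R) (M := R) ([] : List E) := by
    ext l
    simp [Finsupp.single_apply]
  rw [cup, cup, LinearMap.comp_apply, LinearMap.comp_apply, boundary_map]
  exact LinearMap.congr_fun this _

lemma cup_weight_map_neg [Neg E] {s : E → ZMod 2} {ss : List (E → ZMod 2)}
    (hs : IsOddSignOn s A)
    (hss : ∀ c ∈ chainsIn (ZMod 2) A,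
      cup ss (map Neg.neg c) = cup ss c)
    (hc : c ∈ chainsIn (ZMod 2) A) :
    cup ss (weight s (map Neg.neg c)) = cup ss (weight s c) + cup ss c := by
  refine eq_of_mem_supported (T := cup ss ∘ₗ weight s ∘ₗ map Neg.neg)
    (T' := cup ss ∘ₗ weight s + cup ss) (fun l hl => ?_) hc
  cases l with
  | nil => simp
  | cons v l =>
    have hl' := hss _ (Finsupp.single_mem_supported _ 1 hl)
    rw [map_single, List.map_cons] at hl'
    have hweight (w : E) (l : List E) :
        cup ss (weight s (single (w :: l) 1)) = s w * cup ss (single (w :: l) 1) := by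
      rw [weight_cons, ← Finsupp.smul_single_one, map_smul, smul_eq_mul]
    simp only [LinearMap.comp_apply, LinearMap.add_apply, map_single, List.map_cons, hweight, hl',
      hs v (hl v List.mem_cons_self)]
    ring

lemma cup_map_neg [Neg E] {ss : List (E → ZMod 2)} (hss : ∀ s ∈ ss, IsOddSignOn s A)
    (hc : c ∈ chainsIn (ZMod 2) A) : cup ss (map Neg.neg c) = cup ss c := by
  induction ss generalizing c with
  | nil => exact cup_nil_map _ c
  | cons s ss ih =>
    rw [List.forall_mem_cons] at hss
    rw [cup_cons, boundary_map, cup_weight_map_neg hss.1 (fun c hc => ih hss.2 hc)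
      (boundary_mem_chainsIn hc), cup_boundary, add_zero, cup_cons]

lemma cup_cons_of_boundary_eq [Neg E] {s : E → ZMod 2} {ss : List (E → ZMod 2)}
    {d : TupleChain (ZMod 2) E} (hss : ∀ t ∈ s :: ss, IsOddSignOn t A)
    (hc : c ∈ chainsIn (ZMod 2) A) (hd : boundary d = c + map Neg.neg c) :
    cup (s :: ss) d = cup ss c := by
  rw [List.forall_mem_cons] at hss
  rw [cup_cons, hd, map_add, map_add,
    cup_weight_map_neg hss.1 (fun c hc => cup_map_neg hss.2 hc) hc, ← add_assoc,
    ZModModule.add_self, zero_add]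

lemma boundary_add_map_neg [InvolutiveNeg E] {d : TupleChain (ZMod 2) E}
    (hd : boundary d = c + map Neg.neg c) : boundary (d + map Neg.neg d) = 0 := by
  have hinv : map Neg.neg (map Neg.neg c) = c := by
    rw [map_map, show Neg.neg ∘ Neg.neg = (id : E → E) from funext neg_neg, map_id]
  rw [map_add, boundary_map, hd, map_add, hinv, add_comm (map Neg.neg c), ZModModule.add_self]

end Antipode
end TupleChain

lemma exists_lt_finrank_eq {K M : Type*} [DivisionRing K] [AddCommGroup M] [Module K M]
    {V : Submodule K M} {n : ℕ} (hn : n < Module.finrank K V) :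
    ∃ W < V, Module.finrank K W = n := by
  obtain ⟨f, hf⟩ := exists_linearIndependent_of_le_finrank hn.le
  have hrank : Module.finrank K (Submodule.span K (range (V.subtype ∘ f))) = n := by
    simpa using finrank_span_eq_card (hf.map' V.subtype V.ker_subtype)
  have hle : Submodule.span K (range (V.subtype ∘ f)) ≤ V :=
    Submodule.span_le.2 (range_subset_iff.2 fun i => (f i).2)
  exact ⟨_, hle.lt_of_ne fun h => hn.ne (by rw [← hrank, h]), hrank⟩

lemma smul_add_smul_ne_zero_of_notMem {K M : Type*} [DivisionRing K] [AddCommGroup M] [Module K M]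
    {W : Submodule K M} {x e : M} (hx : x ∈ W) (hx0 : x ≠ 0) (he : e ∉ W) (t : K) :
    (1 - t) • x + t • e ≠ 0 := by
  intro h
  have hte : t • e ∈ W := by
    rw [eq_neg_of_add_eq_zero_right h]
    exact W.neg_mem (W.smul_mem _ hx)
  obtain rfl : t = 0 := by_contra fun ht => he ((W.smul_mem_iff ht).1 hte)
  exact hx0 (by simpa using h)

lemma exists_isOddSignOn {E α : Type*} [InvolutiveNeg E] [LinearOrder α] (f : E → α) :
    ∃ s : E → ZMod 2, TupleChain.IsOddSignOn s {x | x ≠ -x} ∧ (∀ x, f x < f (-x) → s x = 1) ∧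
      ∀ x, f (-x) < f x → s x = 0 := by
  classical
  -- Ties are broken by an arbitrary linear order on `E`.
  let _ : LinearOrder E := linearOrderOfSTO WellOrderingRel
  let key (x : E) : α ×ₗ E := toLex (f x, x)
  refine ⟨fun x => if key x < key (-x) then 1 else 0, fun x hx => ?_,
    fun x hx => if_pos (Prod.Lex.left _ _ hx),
    fun x hx => if_neg (lt_asymm (Prod.Lex.left _ _ hx))⟩
  have hkey : key x ≠ key (-x) := fun h => hx (congrArg (fun p => (ofLex p).2) h)
  simp only [neg_neg]
  obtain h | h := hkey.lt_or_gt
  · rw [if_pos h, if_neg h.not_gt, ZModModule.add_self]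
  · rw [if_pos h, if_neg h.not_gt, zero_add]

lemma exists_forall_exists_const_sign {X ι : Type*} [PseudoMetricSpace X] {K : Set X}
    (hK : IsCompact K) {ψ : X → ι → ℝ} (hψ : ContinuousOn ψ K) (hne : ∀ x ∈ K, ψ x ≠ 0) :
    ∃ ε > 0, ∀ x ∈ K, ∃ i, (∀ y ∈ K, dist x y < ε → 0 < ψ y i) ∨
      ∀ y ∈ K, dist x y < ε → ψ y i < 0 := by
  have hloc : ∀ x ∈ K, ∃ U ∈ nhdsWithin x K,
      ∃ i, (∀ y ∈ U, 0 < ψ y i) ∨ ∀ y ∈ U, ψ y i < 0 := by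
    intro x hx
    obtain ⟨i, hi⟩ := Function.ne_iff.1 (hne x hx)
    have hψi := (continuousOn_pi.1 hψ i) x hx
    obtain hneg | hpos := hi.lt_or_gt
    · exact ⟨_, hψi (Iio_mem_nhds hneg), i, Or.inr fun y hy => hy⟩
    · exact ⟨_, hψi (Ioi_mem_nhds hpos), i, Or.inl fun y hy => hy⟩
  choose U hU hsign using hloc
  obtain ⟨ε, hε, hball⟩ := Metric.uniformity_basis_dist.lebesgue_number_lemma_nhdsWithin' hK hU
  refine ⟨ε, hε, fun x hx => ?_⟩
  obtain ⟨⟨x', hx'⟩, hsub⟩ := hball x hx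
  obtain ⟨i, hi⟩ := hsign x' hx'
  exact ⟨i, hi.imp (fun h y hy hxy => h y (hsub ⟨hxy, hy⟩))
    fun h y hy hxy => h y (hsub ⟨hxy, hy⟩)⟩

/-! ### The Borsuk–Ulam theorem -/

section Sphere

variable {E : Type*} [NormedAddCommGroup E] [NormedSpace ℝ E] {V W : Submodule ℝ E} {r ε : ℝ}

/-- The sphere of radius `r` centered at the origin of the subspace `V`, as a set in the ambient
space. -/
def sphereIn (V : Submodule ℝ E) (r : ℝ) : Set E := {x | x ∈ V ∧ ‖x‖ = r}

lemma isCompact_sphereIn [FiniteDimensional ℝ V] : IsCompact (sphereIn V r) := by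
  have := FiniteDimensional.proper_real V
  have himage : sphereIn V r = Subtype.val '' Metric.sphere (0 : V) r := by
    ext x
    simp [sphereIn, and_comm]
  exact himage ▸ (isCompact_sphere 0 r).image continuous_subtype_val

lemma neg_mem_sphereIn {x : E} (hx : x ∈ sphereIn V r) : -x ∈ sphereIn V r :=
  ⟨V.neg_mem hx.1, (norm_neg x).trans hx.2⟩

lemma ne_neg_of_mem_sphereIn (hr : 0 < r) {x : E} (hx : x ∈ sphereIn V r) : x ≠ -x := by
  have := IsAddTorsionFree.of_isTorsionFree ℝ E
  exact self_ne_neg.2 (norm_pos_iff.1 (hx.2 ▸ hr))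

lemma smul_normalize_mem_sphereIn (hr : 0 < r) {x : E} (hxV : x ∈ V) (hx : x ≠ 0) :
    r • NormedSpace.normalize x ∈ sphereIn V r := by
  refine ⟨V.smul_mem _ (V.smul_mem _ hxV), ?_⟩
  rw [norm_smul, NormedSpace.norm_normalize hx, mul_one, Real.norm_of_nonneg hr.le]

namespace TupleChain

lemma exists_boundary_eq_of_sphereIn [FiniteDimensional ℝ W] (hWV : W < V) (hr : 0 < r)
    (hε : 0 < ε) {R : Type*} [Ring R] :
    ∃ δ > 0, ∀ z ∈ smallChains R (sphereIn W r) δ, boundary z = 0 →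
      ∃ c ∈ smallChains R (sphereIn V r) ε, boundary c = z := by
  obtain ⟨hWV, e, heV, heW⟩ := SetLike.lt_iff_le_and_exists.1 hWV
  have hne {x : E} (hx : x ∈ sphereIn W r) : ∀ t : ℝ, (1 - t) • x + t • e ≠ 0 :=
    smul_add_smul_ne_zero_of_notMem hx.1 (norm_pos_iff.1 (hx.2 ▸ hr)) heW
  have he : e ≠ 0 := fun h => heW (h ▸ W.zero_mem)
  refine exists_boundary_eq_of_homotopy_const (e := r • NormedSpace.normalize e)
    (h := fun t x => r • NormedSpace.normalize ((1 - t) • x + t • e)) isCompact_sphereIn ?_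
    (fun t _ x hx => smul_normalize_mem_sphereIn hr
      (V.add_mem (V.smul_mem _ (hWV hx.1)) (V.smul_mem _ heV)) (hne hx t))
    (fun x hx => ?_) (fun x _ => by simp) (smul_normalize_mem_sphereIn hr heV he) hε
  · have hseg : Continuous fun p : ℝ × E => (1 - p.1) • p.2 + p.1 • e := by fun_prop
    exact ((hseg.norm.continuousOn.inv₀ fun p hp => norm_ne_zero_iff.2 (hne hp.2 p.1)).smul
      hseg.continuousOn).const_smul r
  · simp [NormedSpace.normalize, hx.2, smul_smul, hr.ne']

lemma exists_antipodal_chain (hr : 0 < r) (n : ℕ) {V : Submodule ℝ E}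
    (hV : n < Module.finrank ℝ V) (hε : 0 < ε) :
    ∃ c ∈ smallChains (ZMod 2) (sphereIn V r) ε, boundary (c + map Neg.neg c) = 0 ∧
      ∀ ss : List (E → ZMod 2), ss.length = n → (∀ s ∈ ss, IsOddSignOn s (sphereIn V r)) →
        cup ss c = 1 := by
  induction n generalizing V ε with
  | zero =>
    have : Nontrivial V := Module.nontrivial_of_finrank_pos hV
    obtain ⟨v, hv⟩ := exists_norm_eq V hr.le
    refine ⟨single [(v : E)] 1, Finsupp.single_mem_supported _ 1 ⟨?_, ?_⟩, ?_, fun ss hss _ => ?_⟩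
    · simp [sphereIn, ← hv]
    · simpa using hε
    · simp [boundary_cons, ZModModule.add_self]
    · simp [List.length_eq_zero_iff.1 hss, cup, boundary_cons]
  | succ n ih =>
    obtain ⟨W, hWV, hW⟩ := exists_lt_finrank_eq hV
    have : FiniteDimensional ℝ W := Module.finite_of_finrank_pos (by omega)
    have hsub : sphereIn W r ⊆ sphereIn V r := fun x hx => ⟨hWV.le hx.1, hx.2⟩
    obtain ⟨δ, hδ, hfill⟩ := exists_boundary_eq_of_sphereIn (R := ZMod 2) hWV hr hε
    obtain ⟨c, hc, hcycle, hcup⟩ := ih (V := W) (by omega) hδ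
    have hc_neg : map Neg.neg c ∈ smallChains (ZMod 2) (sphereIn W r) δ :=
      map_mem_smallChains (fun x hx => neg_mem_sphereIn hx)
        (fun x _ y _ hxy => by rwa [dist_neg_neg]) hc
    obtain ⟨d, hd, hdc⟩ := hfill _ (add_mem hc hc_neg) hcycle
    refine ⟨d, hd, boundary_add_map_neg hdc, fun ss hlen hodd => ?_⟩
    obtain ⟨s, ss, rfl⟩ := List.exists_cons_of_length_eq_add_one hlen
    have hodd' : ∀ t ∈ s :: ss, IsOddSignOn t (sphereIn W r) :=
      fun t ht x hx => hodd t ht x (hsub hx)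
    rw [cup_cons_of_boundary_eq hodd' (smallChains_le_chainsIn _ _ hc) hdc]
    exact hcup ss (by simpa using hlen) fun t ht => hodd' t (List.mem_cons_of_mem s ht)

end TupleChain

theorem exists_mem_sphereIn_eq_zero {ι : Type*} [Fintype ι]
    (hV : Fintype.card ι < Module.finrank ℝ V) (hr : 0 < r) {ψ : E → ι → ℝ}
    (hψ : ContinuousOn ψ (sphereIn V r))
    (hodd : ∀ x ∈ sphereIn V r, ψ (-x) = -ψ x) : ∃ x ∈ sphereIn V r, ψ x = 0 := by
  by_contra! hne
  have : FiniteDimensional ℝ V := Module.finite_of_finrank_pos (by omega)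
  obtain ⟨ε, hε, hsign⟩ := exists_forall_exists_const_sign isCompact_sphereIn hψ hne
  choose s hs hs_one hs_zero using fun i => exists_isOddSignOn (ψ · i)
  obtain ⟨c, hc, -, hcup⟩ := TupleChain.exists_antipodal_chain hr _ hV hε
  have hone : TupleChain.cup (Finset.univ.toList.map s) c = 1 := by
    refine hcup _ (by simp) ?_
    simp only [List.forall_mem_map]
    exact fun i _ x hx => hs i x (ne_neg_of_mem_sphereIn hr hx)
  have hs_pos {i : ι} {x : E} (hx : x ∈ sphereIn V r) (h : 0 < ψ x i) : s i x = 0 :=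
    hs_zero i x (by rw [hodd x hx, Pi.neg_apply]; linarith)
  have hs_neg {i : ι} {x : E} (hx : x ∈ sphereIn V r) (h : ψ x i < 0) : s i x = 1 :=
    hs_one i x (by rw [hodd x hx, Pi.neg_apply]; linarith)
  have hzero : TupleChain.cup (Finset.univ.toList.map s) c = 0 := by
    refine eq_of_mem_supported (T' := 0) (fun l hl => ?_) hc
    cases l with
    | nil => simp
    | cons v l =>
      have hclose : ∀ y ∈ v :: l, dist v y < ε := hl.2 v List.mem_cons_self
      obtain ⟨i, hi⟩ := hsign v (hl.1 v List.mem_cons_self)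
      obtain ⟨b, hb⟩ : ∃ b, ∀ y ∈ v :: l, s i y = b := hi.elim
        (fun hpos => ⟨0, fun y hy => hs_pos (hl.1 y hy) (hpos y (hl.1 y hy) (hclose y hy))⟩)
        (fun hneg => ⟨1, fun y hy => hs_neg (hl.1 y hy) (hneg y (hl.1 y hy) (hclose y hy))⟩)
      exact TupleChain.cup_eq_zero_of_forall_eq
        (List.mem_map_of_mem (Finset.mem_toList.2 (Finset.mem_univ i)))
        (Finsupp.single_mem_supported _ 1 hb)
  exact zero_ne_one (hzero.symm.trans hone)

end Sphere

section Genus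

variable {H : Type*} [NormedAddCommGroup H] {A : Set H} {n : ℕ}

lemma genus_le {φ : H → EuclideanSpace ℝ (Fin n)} (hφ : Continuous φ)
    (hodd : ∀ u, φ (-u) = -φ u) (hne : ∀ u ∈ A, φ u ≠ 0) : genus A ≤ n :=
  sInf_le ⟨n, rfl, φ, hφ, hodd, hne⟩

lemma le_genus (h : ∀ m < n, ∀ φ : H → EuclideanSpace ℝ (Fin m), Continuous φ →
    (∀ u, φ (-u) = -φ u) → ∃ u ∈ A, φ u = 0) : n ≤ genus A := by
  refine le_sInf ?_
  rintro _ ⟨m, rfl, φ, hφ, hodd, hne⟩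
  refine Nat.cast_le.2 (not_lt.1 fun hm => ?_)
  obtain ⟨u, hu, hzero⟩ := h m hm φ hφ hodd
  exact hne u hu hzero

lemma exists_clm_injOn [NormedSpace ℝ H] (V : Submodule ℝ H) [FiniteDimensional ℝ V] :
    ∃ φ : H →L[ℝ] EuclideanSpace ℝ (Fin (Module.finrank ℝ V)), InjOn φ V := by
  obtain ⟨P, hP⟩ := Submodule.ClosedComplemented.of_finiteDimensional V
  let coords : V ≃L[ℝ] EuclideanSpace ℝ (Fin (Module.finrank ℝ V)) :=
    ContinuousLinearEquiv.ofFinrankEq (by simp)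
  refine ⟨coords ∘L P, fun x hx y hy hxy => ?_⟩
  simpa [hP ⟨x, hx⟩, hP ⟨y, hy⟩] using coords.injective hxy

theorem genus_of_sphere_general [NormedSpace ℝ H] (k : ℕ) (V : Submodule ℝ H)
    (hV : Module.finrank ℝ V = k + 1) (r : ℝ) (hr : 0 < r) :
    genus {x : H | x ∈ V ∧ ‖x‖ = r} = (k + 1 : ℕ∞) ∧
    (∀ m : ℕ, m ≤ k → ∀ φ : H → EuclideanSpace ℝ (Fin m), Continuous φ →
      (∀ u, φ (-u) = -(φ u)) → ∃ x : H, x ∈ V ∧ ‖x‖ = r ∧ φ x = 0) ∧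
    (∃ φ : H → EuclideanSpace ℝ (Fin (k + 1)), Continuous φ ∧ (∀ u, φ (-u) = -(φ u)) ∧
      ∀ x : H, x ∈ V ∧ ‖x‖ = r → φ x ≠ 0) := by
  have : FiniteDimensional ℝ V := Module.finite_of_finrank_pos (by omega)
  have hzero (m : ℕ) (hm : m ≤ k) (φ : H → EuclideanSpace ℝ (Fin m)) (hφ : Continuous φ)
      (hodd : ∀ u, φ (-u) = -φ u) : ∃ x ∈ sphereIn V r, φ x = 0 := by
    obtain ⟨x, hx, hφx⟩ := exists_mem_sphereIn_eq_zero (V := V) (ψ := fun x => (φ x).ofLp)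
      (by simp only [Fintype.card_fin]; omega) hr (by fun_prop) fun x _ => by simp [hodd]
    exact ⟨x, hx, (WithLp.ofLp_eq_zero 2).1 hφx⟩
  obtain ⟨φ, hφ⟩ := hV ▸ exists_clm_injOn V
  have hne : ∀ x ∈ sphereIn V r, φ x ≠ 0 := fun x hx h =>
    hr.ne (by simpa [hφ hx.1 V.zero_mem (h.trans φ.map_zero.symm)] using hx.2)
  refine ⟨le_antisymm ?_ ?_, fun m hm ψ hψ hodd => ?_, φ, φ.continuous, map_neg φ, hne⟩
  · exact_mod_cast genus_le φ.continuous (map_neg φ) hne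
  · exact_mod_cast le_genus fun m hm => hzero m (Nat.le_of_lt_succ hm)
  · simpa [sphereIn, and_assoc] using hzero m hm ψ hψ hodd

end Genus

/-- the genus of a `k`-dimensional sphere `S^k` of radius `r > 0` centered at
the origin in a `(k+1)`-dimensional subspace `V` of a real Hilbert space `H` equals `k+1`.
In particular no continuous odd `φ : H → ℝ^m` with `m ≤ k` is nonzero on all of `S^k`,
while such a map exists for `m = k+1`. -/
theorem genus_of_sphere {H : Type*} [NormedAddCommGroup H] [InnerProductSpace ℝ H]
    [CompleteSpace H] (k : ℕ) (V : Submodule ℝ H) (hV : Module.finrank ℝ V = k + 1)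
    (r : ℝ) (hr : 0 < r) :
    genus {x : H | x ∈ V ∧ ‖x‖ = r} = (k + 1 : ℕ∞) ∧
    (∀ m : ℕ, m ≤ k → ∀ φ : H → EuclideanSpace ℝ (Fin m), Continuous φ →
      (∀ u, φ (-u) = -(φ u)) → ∃ x : H, x ∈ V ∧ ‖x‖ = r ∧ φ x = 0) ∧
    (∃ φ : H → EuclideanSpace ℝ (Fin (k + 1)), Continuous φ ∧ (∀ u, φ (-u) = -(φ u)) ∧
      ∀ x : H, x ∈ V ∧ ‖x‖ = r → φ x ≠ 0) :=
  genus_of_sphere_general k V hV r hr
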